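/- arXiv:1610.07319 — 2 statements merged into one kernel-verified Lean document; each statement's English description precedes it below -/
import Mathlib

section
/- Let ψ₁ and ψ₂ be unit vectors in ℂ^D and let M(1),…,M(n) be an n-outcome POVM on ℂ^D. Then |⟨ψ₁,ψ₂⟩| ≤ Σ_{i=1}^n ⟨ψ₁, M(i)ψ₁⟩^{1/2} · ⟨ψ₂, M(i)ψ₂⟩^{1/2}. -/
open scoped BigOperators Kronecker ComplexOrder Matrix

noncomputable section


namespace QProg

/-- The positive-semidefinite square root of a matrix, extended by `0` to all matrices. -/
noncomputable def matSqrt {α : Type*} [Fintype α] [DecidableEq α]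
    (A : Matrix α α ℂ) : Matrix α α ℂ :=
  @dite _ A.PosSemidef (Classical.propDecidable _) (fun h =>
    (h.1.eigenvectorUnitary : Matrix α α ℂ) *
      Matrix.diagonal ((fun x : ℝ => (x : ℂ)) ∘ Real.sqrt ∘ h.1.eigenvalues) *
      (star h.1.eigenvectorUnitary : Matrix α α ℂ)) (fun _ => 0)

/-- The fidelity `F(ρ,σ) = Tr √(√ρ σ √ρ)` of two (density) matrices. -/
noncomputable def fid {α : Type*} [Fintype α] [DecidableEq α]
    (ρ σ : Matrix α α ℂ) : ℝ :=
  ((matSqrt (matSqrt ρ * σ * matSqrt ρ)).trace).re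

/-- A density matrix: positive semidefinite with unit trace. -/
def IsDensity {α : Type*} [Fintype α] [DecidableEq α] (ρ : Matrix α α ℂ) : Prop :=
  ρ.PosSemidef ∧ ρ.trace = 1

/-- An `n`-outcome POVM: positive semidefinite effects summing to the identity. -/
def IsPOVM {α : Type*} [Fintype α] [DecidableEq α] {n : ℕ}
    (E : Fin n → Matrix α α ℂ) : Prop :=
  (∀ i, (E i).PosSemidef) ∧ ∑ i, E i = 1

/-- The outcome distribution `p^E_ρ(i) = Tr[E(i) ρ]`. -/
noncomputable def outDist {α : Type*} [Fintype α] [DecidableEq α] {n : ℕ}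
    (E : Fin n → Matrix α α ℂ) (ρ : Matrix α α ℂ) (i : Fin n) : ℝ :=
  ((E i * ρ).trace).re

/-- The Bhattacharyya coefficient `B(p,q) = ∑ᵢ √(p i) √(q i)`. -/
noncomputable def bhat {n : ℕ} (p q : Fin n → ℝ) : ℝ :=
  ∑ i, Real.sqrt (p i) * Real.sqrt (q i)

/-- `B(E₁,E₂)`: infimum of `B(p^{E₁}_{ρ₁}, p^{E₂}_{ρ₂}) / F(ρ₁,ρ₂)` over pairs of
density matrices with nonvanishing fidelity. -/
noncomputable def obsB {α : Type*} [Fintype α] [DecidableEq α] {n : ℕ}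
    (E₁ E₂ : Fin n → Matrix α α ℂ) : ℝ :=
  sInf { r : ℝ | ∃ ρ₁ ρ₂ : Matrix α α ℂ, IsDensity ρ₁ ∧ IsDensity ρ₂ ∧
    fid ρ₁ ρ₂ ≠ 0 ∧ r = bhat (outDist E₁ ρ₁) (outDist E₂ ρ₂) / fid ρ₁ ρ₂ }

/-- A post-processing from `n` outcomes to `m` outcomes. -/
def IsPostProc {n m : ℕ} (lam : Fin n → Fin m → ℝ) : Prop :=
  (∀ i y, 0 ≤ lam i y) ∧ ∀ i, ∑ y, lam i y = 1

/-- The action `(λ⋆E)(y) = ∑ᵢ λ(i|y) E(i)` of a post-processing on a POVM. -/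
noncomputable def ppStar {α : Type*} [Fintype α] [DecidableEq α] {n m : ℕ}
    (lam : Fin n → Fin m → ℝ) (E : Fin n → Matrix α α ℂ) (y : Fin m) :
    Matrix α α ℂ :=
  ∑ i, (lam i y : ℂ) • E i

/-- The action `(λ⋆p)(y) = ∑ᵢ λ(i|y) p(i)` of a post-processing on a probability vector. -/
noncomputable def ppStarVec {n m : ℕ} (lam : Fin n → Fin m → ℝ) (p : Fin n → ℝ)
    (y : Fin m) : ℝ :=
  ∑ i, lam i y * p i

/-- A probability vector on `{1,…,n}`. -/
def IsProbVec {n : ℕ} (p : Fin n → ℝ) : Prop :=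
  (∀ i, 0 ≤ p i) ∧ ∑ i, p i = 1

/-- `F(λ₁,λ₂)`: infimum of `B(λ₁⋆p, λ₂⋆p)` over probability vectors `p`. -/
noncomputable def ppF {n m : ℕ} (lam₁ lam₂ : Fin n → Fin m → ℝ) : ℝ :=
  sInf { r : ℝ | ∃ p : Fin n → ℝ, IsProbVec p ∧
    r = bhat (ppStarVec lam₁ p) (ppStarVec lam₂ p) }

section PosSemidef

variable {𝕜 ι m : Type*} [RCLike 𝕜] [Fintype m]

lemma norm_dotProduct_mulVec_le_of_posSemidef {A : Matrix m m 𝕜} (hA : A.PosSemidef)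
    (x y : m → 𝕜) :
    ‖star x ⬝ᵥ A *ᵥ y‖ ≤
      √(RCLike.re (star x ⬝ᵥ A *ᵥ x)) * √(RCLike.re (star y ⬝ᵥ A *ᵥ y)) := by
  let := A.toSeminormedAddCommGroup hA
  let := A.toInnerProductSpace hA
  have inner_eq (u v : m → 𝕜) : inner 𝕜 u v = star u ⬝ᵥ A *ᵥ v := dotProduct_comm _ _
  simpa only [norm_eq_sqrt_re_inner (𝕜 := 𝕜), inner_eq] using norm_inner_le_norm (𝕜 := 𝕜) x y

theorem povm_cauchy_schwarz_overlap_general (s : Finset ι) {M : ι → Matrix m m 𝕜}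
    (hM : ∀ i ∈ s, (M i).PosSemidef) (x y : m → 𝕜) :
    ‖star x ⬝ᵥ (∑ i ∈ s, M i) *ᵥ y‖ ≤
      ∑ i ∈ s, √(RCLike.re (star x ⬝ᵥ M i *ᵥ x)) * √(RCLike.re (star y ⬝ᵥ M i *ᵥ y)) :=
  calc
    ‖star x ⬝ᵥ (∑ i ∈ s, M i) *ᵥ y‖ = ‖∑ i ∈ s, star x ⬝ᵥ M i *ᵥ y‖ := by
      rw [Matrix.sum_mulVec, dotProduct_sum]
    _ ≤ ∑ i ∈ s, ‖star x ⬝ᵥ M i *ᵥ y‖ := norm_sum_le _ _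
    _ ≤ ∑ i ∈ s, √(RCLike.re (star x ⬝ᵥ M i *ᵥ x)) * √(RCLike.re (star y ⬝ᵥ M i *ᵥ y)) :=
      Finset.sum_le_sum fun i hi ↦ norm_dotProduct_mulVec_le_of_posSemidef (hM i hi) x y

end PosSemidef

/-- For unit vectors `ψ₁, ψ₂` in `ℂ^D` and an `n`-outcome POVM `M` on `ℂ^D`,
`|⟨ψ₁,ψ₂⟩| ≤ ∑ᵢ ⟨ψ₁, M(i)ψ₁⟩^{1/2} ⟨ψ₂, M(i)ψ₂⟩^{1/2}`. -/
theorem povm_cauchy_schwarz_overlap {D n : ℕ}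
    (ψ₁ ψ₂ : Fin D → ℂ)
    (hψ₁ : star ψ₁ ⬝ᵥ ψ₁ = 1) (hψ₂ : star ψ₂ ⬝ᵥ ψ₂ = 1)
    (M : Fin n → Matrix (Fin D) (Fin D) ℂ) (hM : IsPOVM M) :
    ‖star ψ₁ ⬝ᵥ ψ₂‖ ≤
      ∑ i, Real.sqrt ((star ψ₁ ⬝ᵥ (M i).mulVec ψ₁).re) *
        Real.sqrt ((star ψ₂ ⬝ᵥ (M i).mulVec ψ₂).re) := by
  simpa only [hM.2, Matrix.one_mulVec, RCLike.re_to_complex] using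
    povm_cauchy_schwarz_overlap_general Finset.univ (fun i _ ↦ hM.1 i) ψ₁ ψ₂

end QProg
end
end

section
/- Let d be an odd prime and ω = exp(2πi/d). For each k ∈ {0,1,…,d−1}, define the unit vector ψ_k ∈ ℂ^d with components (ψ_k)_j = (1/√d)·ω^{j(j−1)k/2 − j} in the standard basis (φ_j)_{j=0}^{d−1} (note j(j−1)/2 is an integer), and define ψ_∞ = φ_0. Then |⟨ψ_j, ψ_k⟩| = 1/√d for all j ≠ k in {0,1,…,d−1}, and |⟨ψ_∞, ψ_k⟩| = 1/√d for all k ∈ {0,1,…,d−1}. -/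
open scoped BigOperators Kronecker ComplexOrder Matrix

noncomputable section


namespace QProg

/-!
A quadratic Gauss sum `S = ∑ₓ e(ax² + bx)` over a finite commutative ring has
`S̄ S = ∑ₓ ∑ₜ e(a(x+t)² + b(x+t) - ax² - bx) = ∑ₜ e(at² + bt) ∑ₓ e(2atx)`. For a primitive
character `e` the inner sum vanishes unless `2at = 0`; if moreover `2` is invertible and `a ∣ b`,
then the surviving terms are all `1`, so `|S|²` is the order of the ring times that of the
annihilator of `a`. The overlap `⟨ψ_j, ψ_k⟩` is `1/d` times such a sum over `ℤ/d` with
`a = (k - j)/2 = -b`, whose annihilator has order `gcd(k - j, d)`.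
-/

open scoped ComplexConjugate

section QuadGaussSum

variable {R : Type*} [CommRing R] [Fintype R]

/-- The quadratic Gauss sum `∑ₓ e(ax² + bx)` over a finite commutative ring, for a complex
additive character `e`. The linear term is kept so that no square has to be completed. -/
def quadGaussSum (e : AddChar R ℂ) (a b : R) : ℂ :=
  ∑ x, e (a * x ^ 2 + b * x)

variable [DecidableEq R] {e : AddChar R ℂ}

theorem conj_quadGaussSum_mul_self (he : e.IsPrimitive) (a b : R) :
    conj (quadGaussSum e a b) * quadGaussSum e a b =
      Fintype.card R * ∑ t with 2 * a * t = 0, e (a * t ^ 2 + b * t) := by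
  have shift (x : R) : conj (e (a * x ^ 2 + b * x)) * quadGaussSum e a b =
      ∑ t, e (a * t ^ 2 + b * t) * e (x * (2 * a * t)) := by
    rw [quadGaussSum, ← Equiv.sum_comp (Equiv.addLeft x), Finset.mul_sum]
    refine Finset.sum_congr rfl fun t _ => ?_
    rw [← AddChar.map_neg_eq_conj, ← AddChar.map_add_eq_mul, ← AddChar.map_add_eq_mul,
      Equiv.coe_addLeft]
    ring_nf
  calc conj (quadGaussSum e a b) * quadGaussSum e a b
      = ∑ x, ∑ t, e (a * t ^ 2 + b * t) * e (x * (2 * a * t)) := by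
        rw [← Finset.sum_congr rfl fun x _ => shift x, ← Finset.sum_mul, ← map_sum]
        rfl
    _ = ∑ t, e (a * t ^ 2 + b * t) * ∑ x, e (x * (2 * a * t)) := by
        rw [Finset.sum_comm]
        simp only [Finset.mul_sum]
    _ = Fintype.card R * ∑ t with 2 * a * t = 0, e (a * t ^ 2 + b * t) := by
        simp only [AddChar.sum_mulShift _ he, Finset.sum_filter, Finset.sum_mul, Nat.cast_ite,
          Nat.cast_zero, mul_ite, ite_mul, mul_zero, zero_mul, mul_comm (Fintype.card R : ℂ)]

theorem norm_quadGaussSum_of_dvd (he : e.IsPrimitive) (h2 : IsUnit (2 : R)) {a b : R}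
    (hab : a ∣ b) :
    ‖quadGaussSum e a b‖ = √(Fintype.card R * Finset.card {t : R | a * t = 0}) := by
  obtain ⟨s, rfl⟩ := hab
  have term_eq_one {t : R} (ht : a * t = 0) : e (a * t ^ 2 + a * s * t) = 1 := by
    have : a * t ^ 2 + a * s * t = 0 := by linear_combination (t + s) * ht
    rw [this, AddChar.map_zero_eq_one]
  have norm_sq : (‖quadGaussSum e a (a * s)‖ ^ 2 : ℂ) =
      Fintype.card R * Finset.card {t : R | a * t = 0} := by
    rw [← Complex.conj_mul', conj_quadGaussSum_mul_self he]
    simp only [mul_assoc 2 a, h2.mul_right_eq_zero]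
    rw [Finset.sum_congr rfl fun t ht => term_eq_one (Finset.mem_filter.1 ht).2]
    simp
  rw [eq_comm, Real.sqrt_eq_iff_eq_sq (by positivity) (norm_nonneg _)]
  exact_mod_cast norm_sq.symm

end QuadGaussSum

theorem two_mul_cast_mul_pred_div_two {R : Type*} [Ring R] (i : ℕ) :
    2 * ((i * (i - 1) / 2 : ℕ) : R) = i ^ 2 - i := by
  have h : 2 * (i * (i - 1) / 2) + i = i ^ 2 := by
    rw [Nat.mul_div_cancel' (Nat.even_mul_pred_self i).two_dvd]
    cases i with
    | zero => rfl
    | succ n => rw [Nat.add_sub_cancel]; ring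
  rw [eq_sub_iff_add_eq]
  exact_mod_cast congrArg (Nat.cast : ℕ → R) h

theorem int_gcd_sub_eq_one_of_prime {p j k : ℕ} (hp : p.Prime) (hj : j < p) (hk : k < p)
    (hjk : j ≠ k) : ((k : ℤ) - j).gcd p = 1 := by
  rw [Int.gcd_comm, ← Int.isCoprime_iff_gcd_eq_one,
    (Nat.prime_iff_prime_int.1 hp).coprime_iff_not_dvd, ← Nat.modEq_iff_dvd]
  exact fun h => hjk (h.eq_of_lt_of_lt hj hk)

section ZMod

theorem isUnit_two_zmod_of_odd {d : ℕ} (hodd : Odd d) : IsUnit (2 : ZMod d) := by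
  exact_mod_cast (ZMod.isUnit_iff_coprime 2 d).2 (Nat.coprime_two_left.2 hodd)

variable {d : ℕ} [NeZero d]

theorem sum_fin_natCast_zmod {M : Type*} [AddCommMonoid M] (f : ZMod d → M) :
    ∑ i : Fin d, f (i.val : ZMod d) = ∑ x, f x := by
  cases d with
  | zero => exact absurd rfl (NeZero.ne 0)
  | succ n => exact Finset.sum_congr rfl fun i _ => congrArg f (Fin.cast_val_eq_self i)

theorem card_zmod_intCast_mul_eq_zero (n : ℤ) :
    Finset.card {t : ZMod d | (n : ZMod d) * t = 0} = n.gcd d := by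
  have mem_ker (t : ZMod d) :
      (n : ZMod d) * t = 0 ↔ t ∈ (nsmulAddMonoidHom n.natAbs : ZMod d →+ ZMod d).ker := by
    rw [AddMonoidHom.mem_ker, nsmulAddMonoidHom_apply, natAbs_nsmul_eq_zero, zsmul_eq_mul]
  simp only [mem_ker]
  rw [← Fintype.card_subtype, ← Nat.card_eq_fintype_card, Int.gcd_comm]
  simpa [Int.gcd] using IsAddCyclic.card_nsmulAddMonoidHom_ker (G := ZMod d) n.natAbs

theorem zmodChar_intCast {C : Type*} [DivisionCommMonoid C] {ω : C} (hω : ω ^ d = 1) (n : ℤ) :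
    AddChar.zmodChar d hω (n : ZMod d) = ω ^ n := by
  rw [← zsmul_one, AddChar.map_zsmul_eq_zpow, ← Nat.cast_one, AddChar.zmodChar_apply', pow_one]

theorem sum_zpow_mul_pred_div_two_eq_quadGaussSum (hodd : Odd d) {ω : ℂ} (hω : ω ^ d = 1)
    (n : ℤ) :
    ∑ i : Fin d, ω ^ (n * (i.val * (i.val - 1) / 2 : ℕ)) =
      quadGaussSum (AddChar.zmodChar d hω) (n * 2⁻¹) (-(n * 2⁻¹)) := by
  have inv_two_mul_two : (2⁻¹ : ZMod d) * 2 = 1 :=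
    ZMod.inv_mul_of_unit 2 (isUnit_two_zmod_of_odd hodd)
  rw [quadGaussSum, ← sum_fin_natCast_zmod]
  refine Finset.sum_congr rfl fun i _ => ?_
  rw [← zmodChar_intCast hω, Int.cast_mul, Int.cast_natCast]
  congr 1
  linear_combination (-n * ((i.val * (i.val - 1) / 2 : ℕ) : ZMod d)) * inv_two_mul_two +
    n * 2⁻¹ * two_mul_cast_mul_pred_div_two (R := ZMod d) i.val

theorem norm_sum_zpow_mul_pred_div_two (hodd : Odd d) {ω : ℂ} (hω : IsPrimitiveRoot ω d)
    (n : ℤ) :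
    ‖∑ i : Fin d, ω ^ (n * (i.val * (i.val - 1) / 2 : ℕ))‖ = √(d * n.gcd d) := by
  have h2 : IsUnit (2 : ZMod d) := isUnit_two_zmod_of_odd hodd
  have h2_inv : IsUnit (2⁻¹ : ZMod d) := .of_mul_eq_one _ (ZMod.inv_mul_of_unit 2 h2)
  rw [sum_zpow_mul_pred_div_two_eq_quadGaussSum hodd hω.pow_eq_one,
    norm_quadGaussSum_of_dvd (AddChar.zmodChar_primitive_of_primitive_root d hω) h2
      (dvd_neg.2 dvd_rfl), ZMod.card, ← card_zmod_intCast_mul_eq_zero]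
  simp only [mul_comm _ (2⁻¹ : ZMod d), mul_assoc, h2_inv.mul_right_eq_zero]

end ZMod

/-- The vector `ψ_k ∈ ℂ^d` of the finite phase space example, for an arbitrary `ω` in place of
`exp(2πi/d)` and an arbitrary label `k : ℕ`. -/
def phaseVector (d : ℕ) (ω : ℂ) (k : ℕ) : Fin d → ℂ := fun i =>
  ((√d : ℝ) : ℂ)⁻¹ * ω ^ (((i.val * (i.val - 1) / 2 * k : ℕ) : ℤ) - (i.val : ℤ))

theorem star_phaseVector_dotProduct_phaseVector {d : ℕ} {ω : ℂ} (hω : ‖ω‖ = 1) (j k : ℕ) :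
    star (phaseVector d ω j) ⬝ᵥ phaseVector d ω k =
      (d : ℂ)⁻¹ * ∑ i : Fin d, ω ^ (((k : ℤ) - j) * (i.val * (i.val - 1) / 2 : ℕ)) := by
  have hω₀ : ω ≠ 0 := norm_ne_zero_iff.1 (hω ▸ one_ne_zero)
  have star_sqrt_inv_mul_self : star ((√d : ℝ) : ℂ)⁻¹ * ((√d : ℝ) : ℂ)⁻¹ = (d : ℂ)⁻¹ := by
    rw [star_inv₀, Complex.star_def, Complex.conj_ofReal, ← mul_inv, ← Complex.ofReal_mul,
      Real.mul_self_sqrt d.cast_nonneg, Complex.ofReal_natCast]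
  have star_zpow_mul_zpow (m n : ℤ) : star (ω ^ m) * ω ^ n = ω ^ (n - m) := by
    rw [star_zpow₀, Complex.star_def, ← Complex.inv_eq_conj hω, inv_zpow, zpow_sub₀ hω₀,
      div_eq_inv_mul]
  rw [dotProduct, Finset.mul_sum]
  refine Finset.sum_congr rfl fun i _ => ?_
  rw [Pi.star_apply, phaseVector, phaseVector, star_mul', mul_mul_mul_comm,
    star_sqrt_inv_mul_self, star_zpow_mul_zpow]
  congr 2
  push_cast
  ring

theorem phase_space_overlaps_general {d : ℕ} [NeZero d] (hodd : Odd d) {ω : ℂ}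
    (hω : IsPrimitiveRoot ω d) :
    (∀ j k : ℕ, ‖star (phaseVector d ω j) ⬝ᵥ phaseVector d ω k‖ =
      √(((k : ℤ) - j).gcd d) / √d) ∧
    (∀ k : ℕ, ‖star (Pi.single 0 1 : Fin d → ℂ) ⬝ᵥ phaseVector d ω k‖ = 1 / √d) := by
  refine ⟨fun j k => ?_, fun k => ?_⟩
  · rw [star_phaseVector_dotProduct_phaseVector (hω.norm'_eq_one (NeZero.ne d)), norm_mul,
      norm_sum_zpow_mul_pred_div_two hodd hω, norm_inv, Complex.norm_natCast,
      Real.sqrt_mul d.cast_nonneg, ← mul_assoc, inv_mul_eq_div, Real.sqrt_div_self,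
      inv_mul_eq_div]
  · rw [← Pi.single_star, star_one, single_dotProduct]
    simp [phaseVector]

/-- finite phase space example, Section 3.3: the programming vectors
`ψ_0,…,ψ_{d−1}` and `ψ_∞ = φ_0` are pairwise non-orthogonal with overlaps of modulus `1/√d`. -/
theorem phase_space_overlaps {d : ℕ} [NeZero d] (hd : d.Prime) (hodd : Odd d)
    (ω : ℂ) (hω : ω = Complex.exp (2 * Real.pi * Complex.I / d))
    (ψ : ℕ → Fin d → ℂ)
    (hψ : ∀ k : ℕ, k < d → ψ k = fun j : Fin d =>
      ((Real.sqrt d : ℝ) : ℂ)⁻¹ *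
        ω ^ ((((j.val * (j.val - 1)) / 2 * k : ℕ) : ℤ) - (j.val : ℤ)))
    (ψinf : Fin d → ℂ) (hψinf : ψinf = (Pi.single 0 (1 : ℂ) : Fin d → ℂ)) :
    (∀ j k : ℕ, j < d → k < d → j ≠ k →
      ‖star (ψ j) ⬝ᵥ ψ k‖ = 1 / Real.sqrt d) ∧
    (∀ k : ℕ, k < d →
      ‖star ψinf ⬝ᵥ ψ k‖ = 1 / Real.sqrt d) := by
  have hroot : IsPrimitiveRoot ω d := hω ▸ Complex.isPrimitiveRoot_exp d (NeZero.ne d)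
  obtain ⟨overlap, overlap_inf⟩ := phase_space_overlaps_general hodd hroot
  have ψ_eq (k : ℕ) (hk : k < d) : ψ k = phaseVector d ω k := hψ k hk
  refine ⟨fun j k hj hk hjk => ?_, fun k hk => ?_⟩
  · rw [ψ_eq j hj, ψ_eq k hk, overlap, int_gcd_sub_eq_one_of_prime hd hj hk hjk, Nat.cast_one,
      Real.sqrt_one]
  · rw [hψinf, ψ_eq k hk, overlap_inf]

end QProg
end
end
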